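/- For every positive integer k divisible by 4, there exists a set of 2·C(k, k/2) dipole words, each of length 20k+3, that attractively encodes the canonical signed 2·C(k, k/2)-glue function, where C(k, k/2) is the binomial coefficient k choose k/2. -/

import Mathlib

/-- The alphabet Σ = {0, 1, ⋄} of dipole letters. -/
inductive Dip : Type
  | zero : Dip
  | one : Dip
  | blank : Dip
  deriving DecidableEq

open Dip

/-- The force between a pair of letters: 1 if {x,y} = {0,1}, -1 if x = y ∈ {0,1}, 0 otherwise. -/
def lf : Dip → Dip → ℤ
  | zero, one => 1
  | one, zero => 1
  | zero, zero => -1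
  | one, one => -1
  | _, _ => 0

/-- The force between a pair of equal-length words: the sum of letterwise forces. -/
def force (X Y : List Dip) : ℤ := (List.zipWith lf X Y).sum

/-- The length-`i` suffix of a word. -/
def sufx (X : List Dip) (i : ℕ) : List Dip := X.drop (X.length - i)

/-- A pair of equal-length words `X`, `Y` is aligned provided `f(X,Y) ≤ 0` and all proper
prefix/suffix overlaps with `Y` and its reverse have non-positive force. -/
def aligned (X Y : List Dip) : Prop :=
  force X Y ≤ 0 ∧
    ∀ A ∈ [Y, Y.reverse], ∀ i, 1 ≤ i → i ≤ X.length - 1 →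
      force (X.take i) (sufx A i) ≤ 0 ∧ force (sufx X i) (A.take i) ≤ 0

/-- The words `W 1, …, W k` attractively encode the `k`-glue function `g`: every pair is
aligned and `f(Wᵢ, Rev(Wⱼ)) > 0` iff `g i j > 0`. -/
def attEncodes (k : ℕ) (W : ℕ → List Dip) (g : ℕ → ℕ → ℤ) : Prop :=
  (∀ i ∈ Finset.Icc 1 k, ∀ j ∈ Finset.Icc 1 k, aligned (W i) (W j)) ∧
    ∀ i ∈ Finset.Icc 1 k, ∀ j ∈ Finset.Icc 1 k,
      (0 < force (W i) ((W j).reverse) ↔ 0 < g i j)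

-- The canonical signed `2k`-glue function: `g i j = 1` if `{i,j} = {2a-1, 2a}` for some
-- `a ∈ {1,…,k}`, and `0` otherwise.
open Classical in
noncomputable def signedGlue (k : ℕ) (i j : ℕ) : ℤ :=
  if ∃ a ∈ Finset.Icc 1 k, (i = 2 * a - 1 ∧ j = 2 * a) ∨ (i = 2 * a ∧ j = 2 * a - 1)
  then 1 else 0

open Finset

/-- The letter with a given charge: `0` has charge `1`, `1` has charge `-1`. -/
def ofCharge (z : ℤ) : Dip := if z = 1 then zero else if z = -1 then one else blank

lemma lf_ofCharge {a b : ℤ} (ha : a = -1 ∨ a = 0 ∨ a = 1) (hb : b = -1 ∨ b = 0 ∨ b = 1) :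
    lf (ofCharge a) (ofCharge b) = -(a * b) := by
  rcases ha with rfl | rfl | rfl <;> rcases hb with rfl | rfl | rfl <;> decide

/-- `F` is a charge distribution supported on `[-M, M]`. -/
structure IsCharge (M : ℕ) (F : ℤ → ℤ) : Prop where
  val : ∀ x, F x = -1 ∨ F x = 0 ∨ F x = 1
  supp : ∀ x, F x ≠ 0 → -(M : ℤ) ≤ x ∧ x ≤ M

/-- The word of length `2 * M + 1` with charges `F (-M), …, F M`. -/
def wordOf (M : ℕ) (F : ℤ → ℤ) : List Dip :=
  (List.range (2 * M + 1)).map fun n : ℕ => ofCharge (F (n - M))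

/-- The correlation of `F` and `G` at shift `s`. -/
noncomputable def corr (F G : ℤ → ℤ) (s : ℤ) : ℤ := ∑ᶠ x, F x * G (x + s)

lemma corr_swap (F G : ℤ → ℤ) (s : ℤ) : corr F G s = corr G F (-s) := by
  unfold corr
  rw [← finsum_comp_equiv (Equiv.addRight (-s))]
  refine finsum_congr fun x => ?_
  simp [mul_comm]

lemma corr_neg_neg (F G : ℤ → ℤ) (s : ℤ) :
    corr (fun x => F (-x)) (fun x => G (-x)) s = corr F G (-s) := by
  unfold corr
  rw [← finsum_comp_equiv (Equiv.neg ℤ)]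
  refine finsum_congr fun x => ?_
  simp [add_comm]

lemma corr_nonneg {F G : ℤ → ℤ} {s : ℤ} (h : ∀ x, 0 ≤ F x * G (x + s)) : 0 ≤ corr F G s :=
  finsum_nonneg h

lemma IsCharge.neg {M : ℕ} {F : ℤ → ℤ} (hF : IsCharge M F) : IsCharge M fun x => F (-x) :=
  ⟨fun x => hF.val _, fun x hx => by have := hF.supp _ hx; omega⟩

lemma corr_eq_sum {M : ℕ} {F : ℤ → ℤ} (hF : IsCharge M F) (G : ℤ → ℤ) (s : ℤ) :
    corr F G s = ∑ x ∈ Icc (-(M : ℤ)) M, F x * G (x + s) := by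
  refine finsum_eq_sum_of_support_subset _ fun x hx => ?_
  have := hF.supp x (left_ne_zero_of_mul hx)
  simpa using this

lemma force_map_range (f g : ℕ → Dip) (n : ℕ) :
    force ((List.range n).map f) ((List.range n).map g) = ∑ i ∈ range n, lf (f i) (g i) := by
  unfold force
  rw [List.zipWith_map, List.zipWith_self, Finset.sum_range, ← List.sum_ofFn,
    List.ofFn_eq_map, ← List.map_coe_finRange_eq_range, List.map_map]
  rfl

lemma length_wordOf (M : ℕ) (F : ℤ → ℤ) : (wordOf M F).length = 2 * M + 1 := by
  simp [wordOf]

lemma take_wordOf (M : ℕ) (F : ℤ → ℤ) {i : ℕ} (hi : i ≤ 2 * M + 1) :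
    (wordOf M F).take i = (List.range i).map fun n : ℕ => ofCharge (F (n - M)) := by
  simp [wordOf, ← List.map_take, List.take_range, hi]

lemma sufx_wordOf (M : ℕ) (F : ℤ → ℤ) {i : ℕ} (hi : i ≤ 2 * M + 1) :
    sufx (wordOf M F) i =
      (List.range i).map fun n : ℕ => ofCharge (F ((n + (2 * M + 1 - i) : ℕ) - M)) := by
  apply List.ext_getElem
  · simp [sufx, wordOf]; omega
  · intro n h1 h2
    simp [sufx, wordOf, add_comm]

lemma reverse_wordOf (M : ℕ) (F : ℤ → ℤ) :
    (wordOf M F).reverse = wordOf M fun x => F (-x) := by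
  apply List.ext_getElem
  · simp [wordOf]
  · intro n h1 h2
    simp only [wordOf, List.length_reverse, List.length_map, List.length_range] at h1
    simp only [wordOf, List.getElem_reverse, List.getElem_map, List.getElem_range,
      List.length_map, List.length_range]
    congr 2
    omega

lemma force_take_sufx {M : ℕ} {F G : ℤ → ℤ} (hF : IsCharge M F) (hG : IsCharge M G) {i : ℕ}
    (hi : i ≤ 2 * M + 1) :
    force ((wordOf M F).take i) (sufx (wordOf M G) i) = -corr F G ((2 * M + 1 - i : ℕ) : ℤ) := by
  rw [take_wordOf M F hi, sufx_wordOf M G hi, force_map_range, corr_eq_sum hF,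
    Finset.sum_congr rfl fun n _ => lf_ofCharge (hF.val _) (hG.val _), Finset.sum_neg_distrib]
  congr 1
  refine Finset.sum_of_injOn (fun n : ℕ => (n : ℤ) - M) ?_ ?_ ?_ ?_
  · intro a _ b _ h
    simpa using h
  · intro a ha
    simp only [coe_range, Set.mem_Iio, coe_Icc, Set.mem_Icc] at ha ⊢
    omega
  · intro x hx hxmem
    by_contra hne
    have hs := hG.supp _ (right_ne_zero_of_mul hne)
    rw [Finset.mem_Icc] at hx
    refine hxmem ⟨(x + M).toNat, ?_, ?_⟩
    · simp only [coe_range, Set.mem_Iio]; omega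
    · simp only []; omega
  · intro n _
    congr 2
    push_cast
    ring

lemma force_comm (X Y : List Dip) : force X Y = force Y X := by
  unfold force
  rw [List.zipWith_comm]
  congr 2
  funext a b
  cases a <;> cases b <;> rfl

lemma force_sufx_take {M : ℕ} {F G : ℤ → ℤ} (hF : IsCharge M F) (hG : IsCharge M G) {i : ℕ}
    (hi : i ≤ 2 * M + 1) :
    force (sufx (wordOf M F) i) ((wordOf M G).take i) =
      -corr F G (-((2 * M + 1 - i : ℕ) : ℤ)) := by
  rw [force_comm, force_take_sufx hG hF hi, corr_swap]

lemma force_wordOf {M : ℕ} {F G : ℤ → ℤ} (hF : IsCharge M F) (hG : IsCharge M G) :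
    force (wordOf M F) (wordOf M G) = -corr F G 0 := by
  have h := force_take_sufx hF hG le_rfl
  rwa [List.take_of_length_le (length_wordOf M F).le, sufx, length_wordOf, Nat.sub_self,
    List.drop_zero, Nat.cast_zero] at h

lemma aligned_wordOf {M : ℕ} {F G : ℤ → ℤ} (hF : IsCharge M F) (hG : IsCharge M G)
    (h : ∀ s, 0 ≤ corr F G s) (hrev : ∀ s ≠ 0, 0 ≤ corr F (fun x => G (-x)) s) :
    aligned (wordOf M F) (wordOf M G) := by
  refine ⟨by rw [force_wordOf hF hG]; linarith [h 0], fun A hA i hi1 hi2 => ?_⟩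
  rw [length_wordOf] at hi2
  have hi : i ≤ 2 * M + 1 := by omega
  rw [reverse_wordOf] at hA
  rcases List.mem_pair.1 hA with rfl | rfl
  · rw [force_take_sufx hF hG hi, force_sufx_take hF hG hi]
    exact ⟨by linarith [h ((2 * M + 1 - i : ℕ) : ℤ)], by linarith [h (-((2 * M + 1 - i : ℕ) : ℤ))]⟩
  · rw [force_take_sufx hF hG.neg hi, force_sufx_take hF hG.neg hi]
    exact ⟨by linarith [hrev ((2 * M + 1 - i : ℕ) : ℤ) (by omega)],
      by linarith [hrev (-((2 * M + 1 - i : ℕ) : ℤ)) (by omega)]⟩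

/-- The support of a probe: an information block `u` around the origin, a lone charge and a run. -/
noncomputable def probeSet (q : ℕ) (u : Finset ℤ) : Finset ℤ :=
  u ∪ insert (4 * q : ℤ) (Ico (6 * q + 1 : ℤ) (7 * q))

/-- A probe: charge `1` on `probeSet q u`. -/
noncomputable def probe (q : ℕ) (u : Finset ℤ) (x : ℤ) : ℤ := if x ∈ probeSet q u then 1 else 0

/-- A plate: charge `1` on `[-(20q+1), 20q+1]`, except for a hole at `γ` and an information block
on `[-q, q]` which carries charge `-1` on `v`. -/
def plate (q : ℕ) (γ : ℤ) (v : Finset ℤ) (x : ℤ) : ℤ :=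
  if -(q : ℤ) ≤ x ∧ x ≤ q then if x ∈ v then -1 else 0
  else if x ≠ γ ∧ -(20 * q + 1 : ℤ) ≤ x ∧ x ≤ 20 * q + 1 then 1 else 0

section
variable {q : ℕ} {γ δ : ℤ} {u v w : Finset ℤ}

lemma plate_neg_apply (q : ℕ) (γ : ℤ) (v : Finset ℤ) :
    (fun x => plate q γ v (-x)) = plate q (-γ) (v.map (Equiv.neg ℤ).toEmbedding) := by
  funext x
  have h1 : (-x = γ) ↔ (x = -γ) := by omega
  have h2 : (-(q : ℤ) ≤ -x ∧ -x ≤ q) ↔ (-(q : ℤ) ≤ x ∧ x ≤ q) := by omega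
  have h3 : (-(20 * q + 1 : ℤ) ≤ -x ∧ -x ≤ 20 * q + 1) ↔
      (-(20 * q + 1 : ℤ) ≤ x ∧ x ≤ 20 * q + 1) := by omega
  simp only [plate, ne_eq, h1, h2, h3, mem_map_equiv, Equiv.neg_symm, Equiv.neg_apply]

lemma neg_one_le_plate (x : ℤ) : -1 ≤ plate q γ v x := by
  unfold plate; split_ifs <;> norm_num

lemma plate_nonneg {x : ℤ} (hx : x < -(q : ℤ) ∨ (q : ℤ) < x) : 0 ≤ plate q γ v x := by
  unfold plate; split_ifs <;> omega

lemma plate_eq_one {x : ℤ} (hx : x < -(q : ℤ) ∨ (q : ℤ) < x) (hγ : x ≠ γ) (hM : -(20 * q + 1 : ℤ) ≤ x ∧ x ≤ 20 * q + 1) :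
    plate q γ v x = 1 := by
  rw [plate, if_neg (by omega), if_pos ⟨hγ, hM⟩]

lemma isCharge_plate (q : ℕ) (γ : ℤ) (v : Finset ℤ) : IsCharge (20 * q + 1) (plate q γ v) := by
  refine ⟨fun x => by unfold plate; split_ifs <;> simp, fun x hx => ?_⟩
  by_contra h
  push_cast at h
  exact hx (by rw [plate, if_neg (by omega), if_neg (by omega)])

lemma isCharge_probe (hu : u ⊆ Icc (-(q : ℤ)) q) : IsCharge (20 * q + 1) (probe q u) := by
  refine ⟨fun x => by unfold probe; split_ifs <;> simp, fun x hx => ?_⟩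
  have hxmem : x ∈ probeSet q u := by
    by_contra h
    exact hx (if_neg h)
  simp only [probeSet, mem_union, mem_insert, mem_Ico] at hxmem
  push_cast
  rcases hxmem with h | h
  · have := mem_Icc.1 (hu h); omega
  · omega

lemma probe_nonneg (x : ℤ) : 0 ≤ probe q u x := by
  unfold probe; split_ifs <;> norm_num

lemma corr_probe (hq : 0 < q) (hu : u ⊆ Icc (-(q : ℤ)) q) (G : ℤ → ℤ) (s : ℤ) :
    corr (probe q u) G s =
      ∑ x ∈ u, G (x + s) + (G (4 * q + s) + ∑ x ∈ Ico (6 * q + 1 : ℤ) (7 * q), G (x + s)) := by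
  have hsupp : corr (probe q u) G s = ∑ x ∈ probeSet q u, probe q u x * G (x + s) := by
    refine finsum_eq_sum_of_support_subset _ fun x hx => ?_
    by_contra h
    exact left_ne_zero_of_mul hx (if_neg h)
  rw [hsupp, Finset.sum_congr rfl fun x hx => by rw [probe, if_pos hx, one_mul], probeSet,
    sum_union, sum_insert]
  · simp only [mem_Ico]; omega
  · rw [disjoint_left]
    intro x hx
    have := mem_Icc.1 (hu hx)
    simp only [mem_insert, mem_Ico]; omega

lemma card_run (hq : 0 < q) : ((#(Ico (6 * q + 1 : ℤ) (7 * q)) : ℕ) : ℤ) = q - 1 := by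
  rw [Int.card_Ico]; omega

/-- Away from exact registration, a probe is never attracted by a plate. -/
lemma corr_probe_plate_nonneg (hq : 2 ≤ q) (hu : u ⊆ Icc (-(q : ℤ)) q) (hcard : #u = q)
    (hγ : γ = 4 * q ∨ γ = -(4 * q)) {s : ℤ} (hs : s = 0 → γ ≠ 4 * q) :
    0 ≤ corr (probe q u) (plate q γ v) s := by
  rw [corr_probe (by omega) hu]
  have hubound : ∀ x ∈ u, -(q : ℤ) ≤ x ∧ x ≤ q := fun x hx => mem_Icc.1 (hu hx)
  have hcardZ : (#u : ℤ) = q := by exact_mod_cast hcard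
  have hrun := card_run (q := q) (by omega)
  have hinfo_lower : -(q : ℤ) ≤ ∑ x ∈ u, plate q γ v (x + s) := by
    have := card_nsmul_le_sum u (fun x => plate q γ v (x + s)) (-1) fun x _ => neg_one_le_plate _
    simp only [nsmul_eq_mul] at this
    linarith
  have hrun_lower : -((q : ℤ) - 1) ≤ ∑ x ∈ Ico (6 * q + 1 : ℤ) (7 * q), plate q γ v (x + s) := by
    have := card_nsmul_le_sum (Ico (6 * q + 1 : ℤ) (7 * q)) (fun x => plate q γ v (x + s)) (-1)
      fun x _ => neg_one_le_plate _
    simp only [nsmul_eq_mul] at this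
    linarith
  have hlone := neg_one_le_plate (q := q) (γ := γ) (v := v) (4 * q + s)
  by_cases h2 : -(2 * q : ℤ) ≤ s ∧ s ≤ 2 * q
  · have h3 : plate q γ v (4 * q + s) = 1 := plate_eq_one (by omega) (by omega) (by omega)
    have h4 : ∑ x ∈ Ico (6 * q + 1 : ℤ) (7 * q), plate q γ v (x + s) = q - 1 := by
      rw [Finset.sum_congr rfl fun x hx => plate_eq_one (by rw [mem_Ico] at hx; omega)
        (by rw [mem_Ico] at hx; omega) (by rw [mem_Ico] at hx; omega)]
      simpa using hrun
    linarith
  · have hinfo : 0 ≤ ∑ x ∈ u, plate q γ v (x + s) :=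
      sum_nonneg fun x hx => plate_nonneg (by have := hubound x hx; omega)
    have hrun_nonneg (h : -(5 * q) ≤ s ∨ s < -(8 * q)) :
        0 ≤ ∑ x ∈ Ico (6 * q + 1 : ℤ) (7 * q), plate q γ v (x + s) :=
      sum_nonneg fun x hx => plate_nonneg (by rw [mem_Ico] at hx; omega)
    by_cases h3 : 0 < s ∨ s < -(8 * q)
    · have h4 : 0 ≤ plate q γ v (4 * q + s) := plate_nonneg (by omega)
      have := hrun_nonneg (by omega)
      linarith
    · have h4 : (q : ℤ) - 1 ≤ ∑ x ∈ u, plate q γ v (x + s) := by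
        have hpt : ∑ x ∈ u, ((1 : ℤ) - if x = γ - s then 1 else 0) ≤
            ∑ x ∈ u, plate q γ v (x + s) := by
          refine sum_le_sum fun x hx => ?_
          have := hubound x hx
          split_ifs with h
          · simpa using plate_nonneg (q := q) (γ := γ) (v := v) (x := x + s) (by omega)
          · rw [plate_eq_one (by omega) (by omega) (by omega)]
            norm_num
        rw [sum_sub_distrib, sum_ite_eq'] at hpt
        simp only [sum_const, nsmul_eq_mul, mul_one] at hpt
        split_ifs at hpt <;> linarith
      by_cases h5 : -(5 * q) ≤ s
      · have := hrun_nonneg (Or.inl h5)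
        have : (2 : ℤ) ≤ q := by exact_mod_cast hq
        linarith
      · have : 0 ≤ plate q γ v (4 * q + s) := plate_nonneg (by omega)
        linarith

/-- In exact registration, the overlap of the information blocks decides the correlation. -/
lemma corr_probe_plate_zero (hq : 0 < q) (hu : u ⊆ Icc (-(q : ℤ)) q) :
    corr (probe q u) (plate q (4 * q) v) 0 = q - 1 - #(u ∩ v) := by
  rw [corr_probe hq hu]
  have h1 : ∑ x ∈ u, plate q (4 * q) v (x + 0) = -#(u ∩ v) := by
    rw [← filter_mem_eq_inter, card_filter]
    push_cast
    rw [← sum_neg_distrib]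
    refine sum_congr rfl fun x hx => ?_
    have := mem_Icc.1 (hu hx)
    rw [add_zero, plate, if_pos (by omega)]
    split_ifs <;> rfl
  have h2 : plate q (4 * q) v (4 * q + 0) = 0 := by
    rw [plate, if_neg (by omega), if_neg (by omega)]
  have h3 : ∑ x ∈ Ico (6 * q + 1 : ℤ) (7 * q), plate q (4 * q) v (x + 0) = q - 1 := by
    rw [Finset.sum_congr rfl fun x hx => plate_eq_one (by rw [mem_Ico] at hx; omega)
      (by rw [mem_Ico] at hx; omega) (by rw [mem_Ico] at hx; omega)]
    simpa using card_run hq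
  rw [h1, h2, h3]
  ring

lemma corr_probe_plate_zero_neg_iff (hq : 0 < q) (hu : u ⊆ Icc (-(q : ℤ)) q) (hcu : #u = q)
    (hcv : #v = q) : corr (probe q u) (plate q (4 * q) v) 0 < 0 ↔ u = v := by
  rw [corr_probe_plate_zero hq hu]
  constructor
  · intro h
    have h1 : u ∩ v = u := eq_of_subset_of_card_le inter_subset_left (by omega)
    exact eq_of_subset_of_card_le (inter_eq_left.1 h1) (by omega)
  · rintro rfl
    rw [inter_self]
    omega

lemma sum_ite_abs_add_le (S : Finset ℤ) (s : ℤ) :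
    ∑ x ∈ S, (if -(q : ℤ) ≤ x + s ∧ x + s ≤ q then 1 else 0 : ℤ) ≤ 2 * q + 1 := by
  rw [← Finset.sum_filter, sum_const, nsmul_eq_mul, mul_one]
  have h : S.filter (fun x => -(q : ℤ) ≤ x + s ∧ x + s ≤ q) ⊆ Icc (-s - q) (-s + q) := fun x hx => by
    rw [mem_filter] at hx
    rw [mem_Icc]; omega
  have := card_le_card h
  rw [Int.card_Icc] at this
  omega

lemma sum_ite_eq_le_one (S : Finset ℤ) (a : ℤ) : ∑ x ∈ S, (if x = a then 1 else 0 : ℤ) ≤ 1 := by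
  rw [sum_ite_eq']
  split_ifs <;> norm_num

/-- Plates repel each other at every shift. -/
lemma corr_plate_plate_nonneg (hq : 0 < q) (s : ℤ) :
    0 ≤ corr (plate q γ v) (plate q δ w) s := by
  by_cases hs : -(21 * q + 1 : ℤ) ≤ s ∧ s ≤ 21 * q + 1
  · obtain ⟨J, hJsub, hJcard, hJ⟩ : ∃ J : Finset ℤ,
        J ⊆ Icc (-((20 * q + 1 : ℕ) : ℤ)) (20 * q + 1 : ℕ) ∧ #J = 19 * q + 1 ∧
        ∀ x ∈ J, (x < -(q : ℤ) ∨ q < x) ∧ (-(20 * q + 1 : ℤ) ≤ x ∧ x ≤ 20 * q + 1) ∧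
          -(20 * q + 1 : ℤ) ≤ x + s ∧ x + s ≤ 20 * q + 1 := by
      rcases le_total 0 s with h | h
      · refine ⟨Ico (-(20 * q + 1 : ℤ)) (-q), fun x hx => ?_, ?_, fun x hx => ?_⟩
        · rw [mem_Ico] at hx; rw [mem_Icc]; omega
        · rw [Int.card_Ico]; omega
        · rw [mem_Ico] at hx; omega
      · refine ⟨Ioc (q : ℤ) (20 * q + 1), fun x hx => ?_, ?_, fun x hx => ?_⟩
        · rw [mem_Ioc] at hx; rw [mem_Icc]; omega
        · rw [Int.card_Ioc]; omega
        · rw [mem_Ioc] at hx; omega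
    rw [corr_eq_sum (isCharge_plate q γ v)]
    set S := Icc (-((20 * q + 1 : ℕ) : ℤ)) (20 * q + 1 : ℕ)
    have hpt : ∀ x ∈ S, (if x ∈ J then 1 else 0 : ℤ) - (if -(q : ℤ) ≤ x + 0 ∧ x + 0 ≤ q then 1 else 0)
        - 2 * (if -(q : ℤ) ≤ x + s ∧ x + s ≤ q then 1 else 0) - (if x = γ then 1 else 0)
        - (if x = δ - s then 1 else 0) ≤ plate q γ v x * plate q δ w (x + s) := by
      intro x _
      have hx : x ∈ J → (x < -(q : ℤ) ∨ q < x) ∧ (-(20 * q + 1 : ℤ) ≤ x ∧ x ≤ 20 * q + 1) ∧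
          -(20 * q + 1 : ℤ) ≤ x + s ∧ x + s ≤ 20 * q + 1 := hJ x
      have hγ : x = δ - s ↔ x + s = δ := by omega
      simp only [hγ, add_zero]
      unfold plate
      generalize x + s = y at *
      by_cases hxJ : x ∈ J
      · have := hx hxJ
        simp only [hxJ, if_true]
        split_ifs <;> omega
      · simp only [hxJ, if_false]
        split_ifs <;> omega
    refine le_trans ?_ (sum_le_sum hpt)
    simp only [sum_sub_distrib, ← mul_sum]
    have hJsum : ∑ x ∈ S, (if x ∈ J then 1 else 0 : ℤ) = 19 * q + 1 := by
      rw [← Finset.sum_filter, filter_mem_eq_inter, inter_eq_right.2 hJsub]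
      simp [hJcard]
    have h1 := sum_ite_abs_add_le (q := q) S 0
    have h2 := sum_ite_abs_add_le (q := q) S s
    have h3 := sum_ite_eq_le_one S γ
    have h4 := sum_ite_eq_le_one S (δ - s)
    have hqZ : (1 : ℤ) ≤ q := by exact_mod_cast hq
    linarith
  · refine corr_nonneg fun x => ?_
    unfold plate
    split_ifs <;> omega

end

/-- For every positive integer `k` divisible by 4, there is a set of `2·C(k, k/2)` dipole
words, each of length `20k+3`, attractively encoding the canonical signed
`2·C(k, k/2)`-glue function. -/
theorem stmt5 (k : ℕ) (hk : 0 < k) (h4 : 4 ∣ k) :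
    ∃ W : ℕ → List Dip,
      (∀ i ∈ Finset.Icc 1 (2 * Nat.choose k (k / 2)), (W i).length = 20 * k + 3) ∧
      attEncodes (2 * Nat.choose k (k / 2)) W (signedGlue (Nat.choose k (k / 2))) := by
  obtain ⟨q, rfl, hq⟩ : ∃ q, k = 2 * q ∧ 2 ≤ q := ⟨k / 2, by omega, by omega⟩
  rw [Nat.mul_div_cancel_left q two_pos]
  set N := Nat.choose (2 * q) q with hN
  obtain ⟨U, hUsub, hUcard, hUinj⟩ : ∃ U : ℕ → Finset ℤ,
      (∀ a < N, U a ⊆ Icc (-(q : ℤ)) q) ∧ (∀ a < N, #(U a) = q) ∧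
      ∀ a < N, ∀ b < N, U a = U b → a = b := by
    set S := powersetCard q (Ico (-(q : ℤ)) q) with hS
    have hcard : S.toList.length = N := by
      rw [length_toList, hS, card_powersetCard, Int.card_Ico, hN]
      congr 1
      omega
    have hmem : ∀ a < N, S.toList.getD a ∅ ∈ S := fun a ha => by
      rw [List.getD_eq_getElem _ _ (hcard ▸ ha), ← mem_toList]
      exact List.getElem_mem _
    refine ⟨fun a => S.toList.getD a ∅, fun a ha => ?_, fun a ha => ?_, fun a ha b hb h => ?_⟩
    · exact (mem_powersetCard.1 (hmem a ha)).1.trans Ico_subset_Icc_self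
    · exact (mem_powersetCard.1 (hmem a ha)).2
    · simp only [List.getD_eq_getElem _ _ (hcard ▸ ha : a < S.toList.length),
        List.getD_eq_getElem _ _ (hcard ▸ hb : b < S.toList.length)] at h
      exact (S.nodup_toList.getElem_inj_iff).1 h
  let Y (a : ℕ) : ℤ → ℤ := plate q (4 * q) (U a)
  let Yrev (a : ℕ) : ℤ → ℤ := fun x => Y a (-x)
  let P (a : ℕ) : ℤ → ℤ := probe q (U a)
  have hYrev (a : ℕ) : Yrev a = plate q (-(4 * q)) ((U a).map (Equiv.neg ℤ).toEmbedding) :=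
    plate_neg_apply _ _ _
  have hYrev_rev (a : ℕ) : (fun x => Yrev a (-x)) = Y a := by funext x; simp [Yrev]
  have hP : ∀ a < N, IsCharge (20 * q + 1) (P a) := fun a ha => isCharge_probe (hUsub a ha)
  have hYc (a : ℕ) : IsCharge (20 * q + 1) (Y a) := isCharge_plate _ _ _
  have hYrev_charge (a : ℕ) : IsCharge (20 * q + 1) (Yrev a) := (hYc a).neg
  have hPP (a b : ℕ) (s : ℤ) : 0 ≤ corr (P a) (P b) s :=
    corr_nonneg fun x => mul_nonneg (probe_nonneg _) (probe_nonneg _)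
  have hPPrev (a b : ℕ) (s : ℤ) : 0 ≤ corr (P a) (fun x => P b (-x)) s :=
    corr_nonneg fun x => mul_nonneg (probe_nonneg _) (probe_nonneg _)
  have hPYrev (b : ℕ) {a : ℕ} (ha : a < N) (s : ℤ) : 0 ≤ corr (P a) (Yrev b) s := by
    rw [hYrev]
    exact corr_probe_plate_nonneg hq (hUsub a ha) (hUcard a ha) (Or.inr rfl) fun _ => by omega
  have hPY (b : ℕ) {a : ℕ} (ha : a < N) (s : ℤ) (hs : s ≠ 0) : 0 ≤ corr (P a) (Y b) s :=
    corr_probe_plate_nonneg hq (hUsub a ha) (hUcard a ha) (Or.inl rfl) fun h => absurd h hs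
  have hPY0 {a b : ℕ} (ha : a < N) (hb : b < N) : corr (P a) (Y b) 0 < 0 ↔ a = b := by
    rw [corr_probe_plate_zero_neg_iff (by omega) (hUsub a ha) (hUcard a ha) (hUcard b hb)]
    exact ⟨hUinj a ha b hb, fun h => h ▸ rfl⟩
  have hYrevYrev (a b : ℕ) (s : ℤ) : 0 ≤ corr (Yrev a) (Yrev b) s := by
    rw [hYrev, hYrev]; exact corr_plate_plate_nonneg (by omega) s
  have hYrevY (a b : ℕ) (s : ℤ) : 0 ≤ corr (Yrev a) (fun x => Yrev b (-x)) s := by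
    rw [hYrev_rev, hYrev]; exact corr_plate_plate_nonneg (by omega) s
  have hYrevP (a b : ℕ) (s : ℤ) : corr (Yrev a) (fun x => P b (-x)) s = corr (P b) (Y a) s := by
    rw [corr_neg_neg, corr_swap, neg_neg]
  let F (i : ℕ) : ℤ → ℤ := if i % 2 = 1 then P ((i - 1) / 2) else Yrev ((i - 1) / 2)
  have hF {i : ℕ} (hi : i ∈ Icc 1 (2 * N)) :
      (i - 1) / 2 < N ∧ (i % 2 = 1 ∧ F i = P ((i - 1) / 2) ∨ i % 2 = 0 ∧ F i = Yrev ((i - 1) / 2)) := by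
    rw [mem_Icc] at hi
    refine ⟨by omega, ?_⟩
    rcases Nat.mod_two_eq_zero_or_one i with h | h <;> simp [F, h]
  have hglue (i j : ℕ) : 0 < signedGlue N i j ↔ ∃ a ∈ Finset.Icc 1 N,
      (i = 2 * a - 1 ∧ j = 2 * a) ∨ (i = 2 * a ∧ j = 2 * a - 1) := by
    unfold signedGlue
    split_ifs with h
    · exact iff_of_true one_pos h
    · exact iff_of_false (lt_irrefl _) h
  have hglue_same {i j : ℕ} (hij : i % 2 = j % 2) : ¬ 0 < signedGlue N i j := by
    rw [hglue]
    rintro ⟨a, ha, h⟩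
    rw [mem_Icc] at ha
    omega
  have hglue_diff {i j : ℕ} (hi : i ∈ Icc 1 (2 * N)) (hj : j ∈ Icc 1 (2 * N))
      (hij : i % 2 ≠ j % 2) : 0 < signedGlue N i j ↔ (i - 1) / 2 = (j - 1) / 2 := by
    rw [mem_Icc] at hi hj
    rw [hglue]
    constructor
    · rintro ⟨a, ha, h⟩
      rw [mem_Icc] at ha
      omega
    · intro h
      exact ⟨(i - 1) / 2 + 1, by rw [mem_Icc]; omega, by omega⟩
  refine ⟨fun i => wordOf (20 * q + 1) (F i), fun i _ => by rw [length_wordOf]; ring,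
    fun i hi j hj => ?_, fun i hi j hj => ?_⟩
  · obtain ⟨ha, ⟨-, hFi⟩ | ⟨-, hFi⟩⟩ := hF hi <;> obtain ⟨hb, ⟨-, hFj⟩ | ⟨-, hFj⟩⟩ := hF hj <;>
      simp only [hFi, hFj]
    · exact aligned_wordOf (hP _ ha) (hP _ hb) (hPP _ _) fun s _ => hPPrev _ _ s
    · refine aligned_wordOf (hP _ ha) (hYrev_charge _) (hPYrev _ ha) fun s hs => ?_
      rw [hYrev_rev]
      exact hPY _ ha s hs
    · refine aligned_wordOf (hYrev_charge _) (hP _ hb) (fun s => ?_) fun s hs => ?_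
      · rw [corr_swap]
        exact hPYrev _ hb _
      · rw [hYrevP]
        exact hPY _ hb s hs
    · exact aligned_wordOf (hYrev_charge _) (hYrev_charge _) (hYrevYrev _ _) fun s _ => hYrevY _ _ s
  · obtain ⟨ha, ⟨hi2, hFi⟩ | ⟨hi2, hFi⟩⟩ := hF hi <;>
      obtain ⟨hb, ⟨hj2, hFj⟩ | ⟨hj2, hFj⟩⟩ := hF hj <;> simp only [hFi, hFj, reverse_wordOf]
    · rw [force_wordOf (hP _ ha) (hP _ hb).neg]
      exact iff_of_false (by have := hPPrev ((i - 1) / 2) ((j - 1) / 2) 0; linarith)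
        (hglue_same (by omega))
    · rw [force_wordOf (hP _ ha) (hYrev_charge _).neg, hYrev_rev, neg_pos, hPY0 ha hb,
        hglue_diff hi hj (by omega)]
    · rw [force_wordOf (hYrev_charge _) (hP _ hb).neg, hYrevP, neg_pos, hPY0 hb ha,
        hglue_diff hi hj (by omega), eq_comm]
    · rw [force_wordOf (hYrev_charge _) (hYrev_charge _).neg]
      exact iff_of_false (by have := hYrevY ((i - 1) / 2) ((j - 1) / 2) 0; linarith)
        (hglue_same (by omega))
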